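/- For every n ≥ 8, every symmetric cost function c on ℤ/nℤ, and every complete selection S = (i₁,i₂,i₃,i₄), the gains of the two moves in orbit O₆ decompose as one crossed bridge plus one parallel bridge: Δ_{r₁₀}(i₁,i₂,i₃,i₄) = cost_c(i₁,i₃) + cost_d(i₂,i₄) and Δ_{r₁₆}(i₁,i₂,i₃,i₄) = cost_d(i₁,i₃) + cost_c(i₂,i₄), where r₁₀ = (−3,−4,+2) and r₁₆ = (+4,−2,−3). -/

import Mathlib

/-- A 4-OPT reinsertion scheme is encoded as a triple of signed integers
`(s₁p₁, s₂p₂, s₃p₃)` where `(p₁,p₂,p₃)` is a permutation of `(2,3,4)`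
and each sign is `+` or `−`. -/
abbrev Scheme := ℤ × ℤ × ℤ

/-- The two possible signs. -/
def signsF : Finset ℤ := {1, -1}

/-- The six permutations of `(2,3,4)`. -/
def permsF : Finset (ℤ × ℤ × ℤ) := {(2,3,4), (2,4,3), (3,2,4), (3,4,2), (4,2,3), (4,3,2)}

/-- All 48 reinsertion schemes. -/
def allSchemes : Finset Scheme :=
  ((signsF ×ˢ signsF ×ˢ signsF) ×ˢ permsF).image
    (fun x => (x.1.1 * x.2.1, x.1.2.1 * x.2.2.1, x.1.2.2 * x.2.2.2))

/-- The 8 schemes with a fixed underlying permutation `(p.1, p.2.1, p.2.2)`,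
obtained by choosing the three signs freely. -/
def schemesOfPerm (p : ℤ × ℤ × ℤ) : Finset Scheme :=
  (signsF ×ˢ signsF ×ˢ signsF).image
    (fun s => (s.1 * p.1, s.2.1 * p.2.1, s.2.2 * p.2.2))

/-- A scheme `(e₁,e₂,e₃)` is pure if its first entry is not `+2`, its last entry is
not `+4`, and no two consecutive entries are of the form `+t, +(t+1)` or `−t, −(t−1)`. -/
def IsPure (e : Scheme) : Prop :=
  e.1 ≠ 2 ∧ e.2.2 ≠ 4 ∧
  ¬ (0 < e.1 ∧ 0 < e.2.1 ∧ e.2.1 = e.1 + 1) ∧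
  ¬ (e.1 < 0 ∧ e.2.1 < 0 ∧ e.2.1 = e.1 + 1) ∧
  ¬ (0 < e.2.1 ∧ 0 < e.2.2 ∧ e.2.2 = e.2.1 + 1) ∧
  ¬ (e.2.1 < 0 ∧ e.2.2 < 0 ∧ e.2.2 = e.2.1 + 1)

instance : DecidablePred IsPure := fun e => by unfold IsPure; infer_instance

/-- A label is a pair `(l, p)` where `l ∈ ZMod 4` stands for the segment index
(`1,2,3` and `0` standing for `4`) and `p` tells whether the label is primed. -/
abbrev Label := ZMod 4 × Bool

/-- Entry label of the oriented segment `e` (`e = +l` or `e = -l`):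
`+l` has entry `(l⊖1)'` and `−l` has entry `l` (plain). -/
def entryL (e : ℤ) : Label :=
  if 0 < e then ((e : ZMod 4) - 1, true) else (-(e : ZMod 4), false)

/-- Exit label of the oriented segment `e`:
`+l` has exit `l` (plain) and `−l` has exit `(l⊖1)'`. -/
def exitL (e : ℤ) : Label :=
  if 0 < e then ((e : ZMod 4), false) else (-(e : ZMod 4) - 1, true)

/-- The reinsertion set `I(r)` of a scheme `r = (e₁,e₂,e₃)`: joining exits to entries
along the cyclic sequence of oriented segments `(+1, e₁, e₂, e₃)`. -/
def reins (r : Scheme) : Finset (Sym2 Label) :=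
  {s(exitL 1, entryL r.1), s(exitL r.1, entryL r.2.1),
   s(exitL r.2.1, entryL r.2.2), s(exitL r.2.2, entryL 1)}

/-- The edges of the tour `0 → 1 → ⋯ → (n−1) → 0` on `ZMod n`. -/
def tourEdges (n : ℕ) : Set (Sym2 (ZMod n)) := {e | ∃ v : ZMod n, e = s(v, v + 1)}

/-- A complete selection: indices `0 ≤ i₁ < i₂ < i₃ < i₄ ≤ n − 1` such that no
`i_h + 1 (mod n)` is again a selection index. -/
structure CompleteSelection (n : ℕ) where
  i : Fin 4 → ℕ
  mono : StrictMono i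
  le : i 3 ≤ n - 1
  complete : ∀ h k : Fin 4, (i h + 1) % n ≠ i k

/-- The removal set `R(S)` of a selection, as edges of `ZMod n`. -/
def removalSet {n : ℕ} (S : CompleteSelection n) : Finset (Sym2 (ZMod n)) :=
  Finset.univ.image (fun k : Fin 4 => s(((S.i k : ZMod n)), (S.i k : ZMod n) + 1))

/-- Instantiation of a label at a selection: label `l` becomes the vertex `i_l`
and label `l'` becomes the vertex `i_l + 1 (mod n)`. -/
def instLabel {n : ℕ} (S : CompleteSelection n) (x : Label) : ZMod n :=
  ((S.i ⟨(x.1 - 1).val, ZMod.val_lt _⟩ : ℕ) : ZMod n) + (if x.2 then 1 else 0)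

/-- The instantiated reinsertion set `I_S(r)`. -/
def instReins {n : ℕ} (S : CompleteSelection n) (r : Scheme) : Finset (Sym2 (ZMod n)) :=
  (reins r).image (Sym2.map (instLabel S))

/-- A simple graph "is a Hamiltonian cycle" if it has a Hamiltonian cycle
whose edges are exactly all the edges of the graph. -/
def IsHamCycleGraph {V : Type*} [DecidableEq V] (G : SimpleGraph V) : Prop :=
  ∃ (v : V) (w : G.Walk v v), w.IsHamiltonianCycle ∧ {e | e ∈ w.edges} = G.edgeSet

/-- Cost of an unordered pair under a symmetric cost function. -/
def pairCost {n : ℕ} (c : ZMod n → ZMod n → ℝ) (hc : ∀ x y, c x y = c y x) :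
    Sym2 (ZMod n) → ℝ := Sym2.lift ⟨c, hc⟩

/-- The gain `Δ_r(S) = c(R(S)) − c(I_S(r))` of the 4-OPT move given by scheme `r`
on selection `S`. -/
def gain {n : ℕ} (c : ZMod n → ZMod n → ℝ) (hc : ∀ x y, c x y = c y x)
    (S : CompleteSelection n) (r : Scheme) : ℝ :=
  ∑ e ∈ removalSet S, pairCost c hc e - ∑ e ∈ instReins S r, pairCost c hc e

/-- The parallel-bridge cost `cost_d`. -/
def costD {n : ℕ} (c : ZMod n → ZMod n → ℝ) (a b : ZMod n) : ℝ :=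
  c a (a + 1) + c b (b + 1) - c a (b + 1) - c (a + 1) b

/-- The crossed-bridge cost `cost_c`. -/
def costC {n : ℕ} (c : ZMod n → ZMod n → ℝ) (a b : ZMod n) : ℝ :=
  c a (a + 1) + c b (b + 1) - c a b - c (a + 1) (b + 1)

/-!
The eight endpoints `i_h`, `i_h + 1` of a complete selection are distinct, so instantiating labels
is injective and the gain of any scheme is a signed sum over four removed and four inserted pairs
of labels. In both schemes of the orbit every inserted pair joins either endpoints of the first
and third removed edges or endpoints of the second and fourth, so the gain splits into two
independent bridges.
-/

namespace CompleteSelection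

variable {n : ℕ} (S : CompleteSelection n)

theorem i_lt (k : Fin 4) : S.i k < n := by
  have h_le_last : S.i k ≤ S.i 3 := S.mono.monotone (Fin.le_last k)
  have h_last_pos : S.i 0 < S.i 3 := S.mono (by decide)
  have h_last_le := S.le
  omega

theorem natCast_i_injective : Function.Injective fun k => (S.i k : ZMod n) := by
  intro h k hhk
  have hmod := (ZMod.natCast_eq_natCast_iff' _ _ _).mp hhk
  rw [Nat.mod_eq_of_lt (S.i_lt h), Nat.mod_eq_of_lt (S.i_lt k)] at hmod
  exact S.mono.injective hmod

theorem natCast_i_add_one_ne (h k : Fin 4) : (S.i h : ZMod n) + 1 ≠ S.i k := by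
  intro hhk
  rw [← Nat.cast_add_one, ZMod.natCast_eq_natCast_iff', Nat.mod_eq_of_lt (S.i_lt k)] at hhk
  exact S.complete h k hhk

end CompleteSelection

section Gain

variable {n : ℕ} (c : ZMod n → ZMod n → ℝ) (hc : ∀ x y, c x y = c y x) (S : CompleteSelection n)

theorem instLabel_injective : Function.Injective (instLabel S) := by
  have index_injective {l m : ZMod 4}
      (h : (S.i ⟨(l - 1).val, ZMod.val_lt _⟩ : ZMod n) = S.i ⟨(m - 1).val, ZMod.val_lt _⟩) :
      l = m :=
    sub_left_injective (ZMod.val_injective 4 (Fin.mk.inj (S.natCast_i_injective h)))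
  rintro ⟨l, _ | _⟩ ⟨m, _ | _⟩ h <;>
    simp only [instLabel, if_true, Bool.false_eq_true, if_false, add_zero] at h
  · rw [index_injective h]
  · exact absurd h.symm (S.natCast_i_add_one_ne _ _)
  · exact absurd h (S.natCast_i_add_one_ne _ _)
  · rw [index_injective (add_right_cancel h)]

theorem sum_removalSet :
    ∑ e ∈ removalSet S, pairCost c hc e = ∑ k, c (S.i k) (S.i k + 1) := by
  refine Finset.sum_image fun h _ k _ hhk => ?_
  rcases Sym2.eq_iff.mp hhk with ⟨same, _⟩ | ⟨swapped, _⟩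
  · exact S.natCast_i_injective same
  · exact absurd swapped.symm (S.natCast_i_add_one_ne k h)

theorem sum_instReins (r : Scheme) :
    ∑ e ∈ instReins S r, pairCost c hc e =
      ∑ e ∈ reins r, pairCost c hc (e.map (instLabel S)) :=
  Finset.sum_image (Sym2.map.injective (instLabel_injective S)).injOn

theorem nodup_reins_pairs : ∀ r ∈ allSchemes,
    [s(exitL 1, entryL r.1), s(exitL r.1, entryL r.2.1),
      s(exitL r.2.1, entryL r.2.2), s(exitL r.2.2, entryL 1)].Nodup := by
  decide

theorem sum_reins {M : Type*} [AddCommMonoid M] {r : Scheme} (hr : r ∈ allSchemes)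
    (f : Sym2 Label → M) :
    ∑ e ∈ reins r, f e =
      f s(exitL 1, entryL r.1) + f s(exitL r.1, entryL r.2.1) +
        f s(exitL r.2.1, entryL r.2.2) + f s(exitL r.2.2, entryL 1) := by
  have h_sum := List.sum_toFinset f (nodup_reins_pairs r hr)
  simpa [reins, add_assoc] using h_sum

-- `S.i` is indexed from `0`, so segment `l` is `k + 1` with `k : Fin 4`; subtraction in `Fin 4` is
-- cyclic, so `k - 1` is the index of the endpoint `l ⊖ 1`.
theorem instLabel_exitL_pos (k : Fin 4) : instLabel S (exitL (k + 1)) = S.i k := by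
  fin_cases k <;> exact add_zero _

theorem instLabel_entryL_neg (k : Fin 4) : instLabel S (entryL (-(k + 1))) = S.i k := by
  fin_cases k <;> exact add_zero _

theorem instLabel_entryL_pos (k : Fin 4) : instLabel S (entryL (k + 1)) = S.i (k - 1) + 1 := by
  fin_cases k <;> rfl

theorem instLabel_exitL_neg (k : Fin 4) :
    instLabel S (exitL (-(k + 1))) = S.i (k - 1) + 1 := by
  fin_cases k <;> rfl

theorem gain_of_mem_allSchemes {r : Scheme} (hr : r ∈ allSchemes) :
    gain c hc S r = ∑ k, c (S.i k) (S.i k + 1) -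
      (c (S.i 0) (instLabel S (entryL r.1)) +
        c (instLabel S (exitL r.1)) (instLabel S (entryL r.2.1)) +
        c (instLabel S (exitL r.2.1)) (instLabel S (entryL r.2.2)) +
        c (instLabel S (exitL r.2.2)) (S.i 3 + 1)) := by
  have exit₁ : instLabel S (exitL 1) = S.i 0 := instLabel_exitL_pos S 0
  have entry₁ : instLabel S (entryL 1) = S.i 3 + 1 := instLabel_entryL_pos S 0
  rw [gain, sum_removalSet, sum_instReins, sum_reins hr]
  simp only [Sym2.map_mk, pairCost, Sym2.lift_mk, exit₁, entry₁]

theorem gain_neg_three_neg_four_two :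
    gain c hc S (-3, -4, 2) = ∑ k, c (S.i k) (S.i k + 1) -
      (c (S.i 0) (S.i 2) + c (S.i 1 + 1) (S.i 3) +
        c (S.i 2 + 1) (S.i 0 + 1) + c (S.i 1) (S.i 3 + 1)) := by
  have entry₃ : instLabel S (entryL (-3)) = S.i 2 := instLabel_entryL_neg S 2
  have exit₃ : instLabel S (exitL (-3)) = S.i 1 + 1 := instLabel_exitL_neg S 2
  have entry₄ : instLabel S (entryL (-4)) = S.i 3 := instLabel_entryL_neg S 3
  have exit₄ : instLabel S (exitL (-4)) = S.i 2 + 1 := instLabel_exitL_neg S 3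
  have entry₂ : instLabel S (entryL 2) = S.i 0 + 1 := instLabel_entryL_pos S 1
  have exit₂ : instLabel S (exitL 2) = S.i 1 := instLabel_exitL_pos S 1
  rw [gain_of_mem_allSchemes c hc S (by decide), entry₃, exit₃, entry₄, exit₄, entry₂, exit₂]

theorem gain_four_neg_two_neg_three :
    gain c hc S (4, -2, -3) = ∑ k, c (S.i k) (S.i k + 1) -
      (c (S.i 0) (S.i 2 + 1) + c (S.i 3) (S.i 1) +
        c (S.i 0 + 1) (S.i 2) + c (S.i 1 + 1) (S.i 3 + 1)) := by
  have entry₄ : instLabel S (entryL 4) = S.i 2 + 1 := instLabel_entryL_pos S 3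
  have exit₄ : instLabel S (exitL 4) = S.i 3 := instLabel_exitL_pos S 3
  have entry₂ : instLabel S (entryL (-2)) = S.i 1 := instLabel_entryL_neg S 1
  have exit₂ : instLabel S (exitL (-2)) = S.i 0 + 1 := instLabel_exitL_neg S 1
  have entry₃ : instLabel S (entryL (-3)) = S.i 2 := instLabel_entryL_neg S 2
  have exit₃ : instLabel S (exitL (-3)) = S.i 1 + 1 := instLabel_exitL_neg S 2
  rw [gain_of_mem_allSchemes c hc S (by decide), entry₄, exit₄, entry₂, exit₂, entry₃, exit₃]

end Gain

/-- The gains of the two moves of orbit `O₆`, `r₁₀ = (−3,−4,+2)` and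
`r₁₆ = (+4,−2,−3)`, decompose as one crossed bridge plus one parallel bridge. -/
theorem gain_orbit_six (n : ℕ) (hn : 8 ≤ n) (c : ZMod n → ZMod n → ℝ)
    (hc : ∀ x y, c x y = c y x) (S : CompleteSelection n) :
    gain c hc S (-3, -4, 2) =
      costC c (S.i 0 : ZMod n) (S.i 2 : ZMod n) +
      costD c (S.i 1 : ZMod n) (S.i 3 : ZMod n) ∧
    gain c hc S (4, -2, -3) =
      costD c (S.i 0 : ZMod n) (S.i 2 : ZMod n) +
      costC c (S.i 1 : ZMod n) (S.i 3 : ZMod n) := by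
  constructor
  · rw [gain_neg_three_neg_four_two, Fin.sum_univ_four, costC, costD, hc (S.i 2 + 1) (S.i 0 + 1)]
    ring
  · rw [gain_four_neg_two_neg_three, Fin.sum_univ_four, costD, costC, hc (S.i 3) (S.i 1)]
    ring
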